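/- For behaviors B₁ on Υ₁ = (M₁, C₁, O) and B₂ on Υ₂ = (M₂, C₂, O) with M₁ and M₂ disjoint, the contextual fraction of the product satisfies CF(B₁ ⊗ B₂) ≤ CF(B₁) + CF(B₂) − CF(B₁)·CF(B₂). -/

import Mathlib

/-!
The proof rests on the sub-distribution form of a decomposition: for a behavior `p`, the number
`l` is admissible in the definition of `CF C p` if and only if some probability distribution `d`
on `O^M` satisfies `(1 - l) * marg γ d ≤ p γ` on every context (`mem_cfSet_iff`). The remainder
`p - (1 - l) * marg d` has total mass `l` on each context, so for `l > 0` it is `l` times a behavior,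
and for `l = 0` it vanishes.

If `d₁`, `d₂` witness that `l₁`, `l₂` are admissible for the two factors, the product distribution
`d₁ ⊗ d₂` has product marginals (`marg_joinCtx`), and multiplying the two inequalities gives
`(1 - l₁) (1 - l₂) * marg (d₁ ⊗ d₂) ≤ p₁ ⊗ p₂`. Hence `l₁ + l₂ - l₁ l₂ = 1 - (1 - l₁) (1 - l₂)` is
admissible for the product, and since this expression is continuous in each variable, the bound
passes to the two infima.

The infimum could be taken over an empty set, where `sInf` is `0`: this happens when `O^M` is empty.
If it happens for a factor it also happens for the product, whose fraction is then `0`.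
-/

open Finset

/-- A family assigning to each context `γ` a real-valued function on joint
outcome assignments `↥γ → O`. Behaviors are such families. -/
abbrev Fam (M O : Type) : Type := (γ : Finset M) → (↥γ → O) → ℝ

variable {M O : Type} [Fintype M] [DecidableEq M] [Fintype O] [DecidableEq O]

/-- `p` is a behavior for the scenario with contexts `C`: on every context it is a
probability distribution on joint outcomes. -/
def IsBehavior (C : Finset (Finset M)) (p : Fam M O) : Prop :=
  ∀ γ ∈ C, (∀ s, 0 ≤ p γ s) ∧ ∑ s, p γ s = 1

/-- Marginal of a global distribution `d` on `O^M` on the context `γ`. -/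
def marg (γ : Finset M) (d : (M → O) → ℝ) (s : ↥γ → O) : ℝ :=
  ∑ f : M → O, if (fun x : ↥γ => f x.1) = s then d f else 0

/-- A behavior is non-contextual when it admits a global section: a probability
distribution on `O^M` marginalizing to `p γ` on every context `γ ∈ C`. -/
def NonContextual (C : Finset (Finset M)) (p : Fam M O) : Prop :=
  ∃ d : (M → O) → ℝ, (∀ f, 0 ≤ d f) ∧ (∑ f, d f = 1) ∧
    ∀ γ ∈ C, ∀ s, p γ s = marg γ d s

/-- The contextual fraction: the infimum of `l ∈ [0,1]` such that the behavior
decomposes as `l B' + (1-l) B^NC` with `B'` a behavior and `B^NC` non-contextual. -/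
noncomputable def CF (C : Finset (Finset M)) (p : Fam M O) : ℝ :=
  sInf {l : ℝ | 0 ≤ l ∧ l ≤ 1 ∧
    ∃ p' pnc : Fam M O, IsBehavior C p' ∧ IsBehavior C pnc ∧ NonContextual C pnc ∧
      ∀ γ ∈ C, ∀ s, p γ s = l * p' γ s + (1 - l) * pnc γ s}

variable {M₁ M₂ : Type} [Fintype M₁] [DecidableEq M₁] [Fintype M₂] [DecidableEq M₂]

/-- Embedding of the first set of measurements into the disjoint union. -/
def inlEmb (M₁ M₂ : Type) : M₁ ↪ M₁ ⊕ M₂ := ⟨Sum.inl, Sum.inl_injective⟩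

/-- Embedding of the second set of measurements into the disjoint union. -/
def inrEmb (M₁ M₂ : Type) : M₂ ↪ M₁ ⊕ M₂ := ⟨Sum.inr, Sum.inr_injective⟩

/-- The context `γ₁ ∪ γ₂` inside the disjoint union of measurements. -/
def joinCtx (γ₁ : Finset M₁) (γ₂ : Finset M₂) : Finset (M₁ ⊕ M₂) :=
  γ₁.map (inlEmb M₁ M₂) ∪ γ₂.map (inrEmb M₁ M₂)

/-- Contexts of the product scenario: `{γ₁ ∪ γ₂ : γ₁ ∈ C₁, γ₂ ∈ C₂}`. -/
def prodC (C₁ : Finset (Finset M₁)) (C₂ : Finset (Finset M₂)) : Finset (Finset (M₁ ⊕ M₂)) :=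
  (C₁ ×ˢ C₂).image fun gg => joinCtx gg.1 gg.2

/-- Contexts of the controlled-choice scenario: `C₁ ∪ C₂`. -/
def ccC (C₁ : Finset (Finset M₁)) (C₂ : Finset (Finset M₂)) : Finset (Finset (M₁ ⊕ M₂)) :=
  C₁.image (fun γ => γ.map (inlEmb M₁ M₂)) ∪ C₂.image (fun γ => γ.map (inrEmb M₁ M₂))

/-- Restriction of a joint outcome assignment on `γ₁ ∪ γ₂` to `γ₁`. -/
def restr1 (γ₁ : Finset M₁) (γ₂ : Finset M₂) (s : ↥(joinCtx γ₁ γ₂) → O) : ↥γ₁ → O :=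
  fun x => s ⟨Sum.inl x.1, Finset.mem_union_left _ (Finset.mem_map_of_mem _ x.2)⟩

/-- Restriction of a joint outcome assignment on `γ₁ ∪ γ₂` to `γ₂`. -/
def restr2 (γ₁ : Finset M₁) (γ₂ : Finset M₂) (s : ↥(joinCtx γ₁ γ₂) → O) : ↥γ₂ → O :=
  fun x => s ⟨Sum.inr x.1, Finset.mem_union_right _ (Finset.mem_map_of_mem _ x.2)⟩

/-- Identification of outcome assignments on the copy of `γ ∈ C₁` inside `M₁ ⊕ M₂`
with outcome assignments on `γ`. -/
def restrL (γ : Finset M₁) (s : ↥(γ.map (inlEmb M₁ M₂)) → O) : ↥γ → O :=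
  fun x => s ⟨Sum.inl x.1, Finset.mem_map_of_mem _ x.2⟩

/-- Identification of outcome assignments on the copy of `γ ∈ C₂` inside `M₁ ⊕ M₂`
with outcome assignments on `γ`. -/
def restrR (γ : Finset M₂) (s : ↥(γ.map (inrEmb M₁ M₂)) → O) : ↥γ → O :=
  fun x => s ⟨Sum.inr x.1, Finset.mem_map_of_mem _ x.2⟩

/-- The set of admissible weights whose infimum is `CF C p`. -/
def cfSet (C : Finset (Finset M)) (p : Fam M O) : Set ℝ :=
  {l : ℝ | 0 ≤ l ∧ l ≤ 1 ∧
    ∃ p' pnc : Fam M O, IsBehavior C p' ∧ IsBehavior C pnc ∧ NonContextual C pnc ∧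
      ∀ γ ∈ C, ∀ s, p γ s = l * p' γ s + (1 - l) * pnc γ s}

lemma CF_eq_sInf_cfSet (C : Finset (Finset M)) (p : Fam M O) : CF C p = sInf (cfSet C p) := rfl

lemma CF_nonneg (C : Finset (Finset M)) (p : Fam M O) : 0 ≤ CF C p :=
  Real.sInf_nonneg fun _ hl => hl.1

lemma bddBelow_cfSet (C : Finset (Finset M)) (p : Fam M O) : BddBelow (cfSet C p) :=
  ⟨0, fun _ hl => hl.1⟩

lemma CF_le_one (C : Finset (Finset M)) (p : Fam M O) : CF C p ≤ 1 := by
  rw [CF_eq_sInf_cfSet]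
  rcases (cfSet C p).eq_empty_or_nonempty with h | ⟨l, hl⟩
  · rw [h, Real.sInf_empty]
    exact zero_le_one
  · exact (csInf_le (bddBelow_cfSet C p) hl).trans hl.2.1

lemma marg_nonneg (γ : Finset M) {d : (M → O) → ℝ} (hd : ∀ f, 0 ≤ d f) (s : ↥γ → O) :
    0 ≤ marg γ d s :=
  Finset.sum_nonneg fun f _ => by
    split_ifs
    · exact hd f
    · exact le_rfl

lemma sum_marg (γ : Finset M) (d : (M → O) → ℝ) : ∑ s, marg γ d s = ∑ f, d f := by
  unfold marg
  rw [Finset.sum_comm]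
  simp

lemma isBehavior_marg (C : Finset (Finset M)) {d : (M → O) → ℝ} (hd : ∀ f, 0 ≤ d f)
    (hsum : ∑ f, d f = 1) : IsBehavior C (fun γ s => marg γ d s) :=
  fun γ _ => ⟨marg_nonneg γ hd, (sum_marg γ d).trans hsum⟩

/-- A weight `l` is admissible if and only if `p` dominates `1 - l` times the marginals of some
global distribution. -/
lemma mem_cfSet_iff {C : Finset (Finset M)} {p : Fam M O} (hp : IsBehavior C p) (l : ℝ) :
    l ∈ cfSet C p ↔ 0 ≤ l ∧ l ≤ 1 ∧ ∃ d : (M → O) → ℝ, (∀ f, 0 ≤ d f) ∧ ∑ f, d f = 1 ∧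
      ∀ γ ∈ C, ∀ s, (1 - l) * marg γ d s ≤ p γ s := by
  constructor
  · rintro ⟨h0, h1, p', pnc, hp', -, ⟨d, hd, hsum, hmarg⟩, hdec⟩
    refine ⟨h0, h1, d, hd, hsum, fun γ hγ s => ?_⟩
    rw [hdec γ hγ s, ← hmarg γ hγ s]
    linarith [mul_nonneg h0 ((hp' γ hγ).1 s)]
  · rintro ⟨h0, h1, d, hd, hsum, hle⟩
    have hnc : NonContextual C (fun γ s => marg γ d s) := ⟨d, hd, hsum, fun _ _ _ => rfl⟩
    have hb := isBehavior_marg C hd hsum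
    rcases h0.eq_or_lt with rfl | hpos
    · refine ⟨le_rfl, h1, _, _, hb, hb, hnc, fun γ hγ s => ?_⟩
      -- The marginal lies below `p γ` and both have total mass one, so they agree.
      have h := (Finset.sum_eq_sum_iff_of_le
        (fun s _ => by simpa using hle γ hγ s : ∀ s ∈ univ, marg γ d s ≤ p γ s)).1
        ((hb γ hγ).2.trans (hp γ hγ).2.symm) s (mem_univ s)
      simp [h]
    · refine ⟨h0, h1, fun γ s => (p γ s - (1 - l) * marg γ d s) / l, _,
        fun γ hγ => ⟨fun s => div_nonneg (sub_nonneg.2 (hle γ hγ s)) h0, ?_⟩, hb, hnc,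
        fun γ hγ s => ?_⟩
      · rw [← Finset.sum_div, Finset.sum_sub_distrib, ← Finset.mul_sum, (hp γ hγ).2, sum_marg,
          hsum]
        field_simp
        ring
      · field_simp
        ring

lemma cfSet_nonempty {C : Finset (Finset M)} {p : Fam M O} (hp : IsBehavior C p) (f₀ : M → O) :
    (cfSet C p).Nonempty :=
  ⟨1, (mem_cfSet_iff hp 1).2 ⟨zero_le_one, le_rfl, Pi.single f₀ 1,
    fun f => (Pi.single_nonneg.2 zero_le_one : (0 : (M → O) → ℝ) ≤ _) f, by simp,
    fun γ hγ s => by simpa using (hp γ hγ).1 s⟩⟩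

/-- Outcome assignments on `γ₁ ∪ γ₂` are pairs of assignments on `γ₁` and on `γ₂`. -/
lemma restr_bijective (γ₁ : Finset M₁) (γ₂ : Finset M₂) :
    Function.Bijective fun s : ↥(joinCtx γ₁ γ₂) → O => (restr1 γ₁ γ₂ s, restr2 γ₁ γ₂ s) := by
  constructor
  · intro s t h
    obtain ⟨h1, h2⟩ := Prod.mk.inj h
    funext ⟨x, hx⟩
    rcases x with x | x
    · exact congrFun h1 ⟨x, by simpa [joinCtx, inlEmb, inrEmb] using hx⟩
    · exact congrFun h2 ⟨x, by simpa [joinCtx, inlEmb, inrEmb] using hx⟩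
  · rintro ⟨a, b⟩
    refine ⟨fun x => match x with
      | ⟨Sum.inl y, hy⟩ => a ⟨y, by simpa [joinCtx, inlEmb, inrEmb] using hy⟩
      | ⟨Sum.inr y, hy⟩ => b ⟨y, by simpa [joinCtx, inlEmb, inrEmb] using hy⟩, ?_⟩
    rfl

lemma sum_restr_mul (γ₁ : Finset M₁) (γ₂ : Finset M₂) (a : (↥γ₁ → O) → ℝ) (b : (↥γ₂ → O) → ℝ) :
    ∑ s : ↥(joinCtx γ₁ γ₂) → O, a (restr1 γ₁ γ₂ s) * b (restr2 γ₁ γ₂ s)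
      = (∑ s, a s) * ∑ s, b s := by
  rw [Fintype.sum_mul_sum, ← Fintype.sum_prod_type']
  exact (restr_bijective γ₁ γ₂).sum_comp (fun x => a x.1 * b x.2)

/-- The product of two distributions on `O^M₁` and `O^M₂`, as a function on `O^(M₁ ⊕ M₂)`. -/
def prodDist (d₁ : (M₁ → O) → ℝ) (d₂ : (M₂ → O) → ℝ) (f : M₁ ⊕ M₂ → O) : ℝ :=
  d₁ (f ∘ Sum.inl) * d₂ (f ∘ Sum.inr)

lemma sum_comp_inl_mul_comp_inr (a : (M₁ → O) → ℝ) (b : (M₂ → O) → ℝ) :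
    ∑ f : M₁ ⊕ M₂ → O, a (f ∘ Sum.inl) * b (f ∘ Sum.inr) = (∑ f, a f) * ∑ f, b f := by
  rw [Fintype.sum_mul_sum, ← Fintype.sum_prod_type']
  exact (Equiv.sumArrowEquivProdArrow M₁ M₂ O).sum_comp (fun x => a x.1 * b x.2)

/-- The marginals of a product distribution are products of marginals. -/
lemma marg_joinCtx (γ₁ : Finset M₁) (γ₂ : Finset M₂) (d₁ : (M₁ → O) → ℝ) (d₂ : (M₂ → O) → ℝ)
    (s : ↥(joinCtx γ₁ γ₂) → O) :
    marg (joinCtx γ₁ γ₂) (prodDist d₁ d₂) s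
      = marg γ₁ d₁ (restr1 γ₁ γ₂ s) * marg γ₂ d₂ (restr2 γ₁ γ₂ s) := by
  unfold marg
  rw [← sum_comp_inl_mul_comp_inr]
  refine Finset.sum_congr rfl fun f _ => ?_
  have h : ((fun x : ↥(joinCtx γ₁ γ₂) => f x.1) = s) ↔
      (fun x : ↥γ₁ => (f ∘ Sum.inl) x.1) = restr1 γ₁ γ₂ s ∧
        (fun x : ↥γ₂ => (f ∘ Sum.inr) x.1) = restr2 γ₁ γ₂ s := by
    rw [← (restr_bijective γ₁ γ₂).1.eq_iff, Prod.mk.injEq]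
    rfl
  rw [ite_zero_mul_ite_zero]
  simp only [h, prodDist]

/-- A bound that is affine in the weight passes from all admissible weights to the infimum. -/
lemma le_of_forall_cfSet {C : Finset (Finset M)} {p : Fam M O} (hne : (cfSet C p).Nonempty)
    {c l : ℝ} (h : ∀ x ∈ cfSet C p, c ≤ x + l - x * l) : c ≤ CF C p + l - CF C p * l := by
  have hcl : IsClosed {x : ℝ | c ≤ x + l - x * l} :=
    isClosed_le continuous_const (by fun_prop)
  exact hcl.closure_subset_iff.2 h (csInf_mem_closure hne (bddBelow_cfSet C p))

/-- The contextual fraction of the product satisfies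
`CF(B₁ ⊗ B₂) ≤ CF B₁ + CF B₂ − CF B₁ · CF B₂`. -/
theorem cf_product
    (C₁ : Finset (Finset M₁)) (C₂ : Finset (Finset M₂))
    (p₁ : Fam M₁ O) (p₂ : Fam M₂ O) (p12 : Fam (M₁ ⊕ M₂) O)
    (h₁ : IsBehavior C₁ p₁) (h₂ : IsBehavior C₂ p₂)
    (h12 : ∀ γ₁ ∈ C₁, ∀ γ₂ ∈ C₂, ∀ s : ↥(joinCtx γ₁ γ₂) → O,
      p12 (joinCtx γ₁ γ₂) s = p₁ γ₁ (restr1 γ₁ γ₂ s) * p₂ γ₂ (restr2 γ₁ γ₂ s)) :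
    CF (prodC C₁ C₂) p12 ≤ CF C₁ p₁ + CF C₂ p₂ - CF C₁ p₁ * CF C₂ p₂ := by
  have ha := CF_nonneg C₁ p₁
  have hb := CF_nonneg C₂ p₂
  have ha1 := CF_le_one C₁ p₁
  rcases (cfSet (prodC C₁ C₂) p12).eq_empty_or_nonempty with hE | ⟨_, _, _, _, _, _, _, hnc, _⟩
  · rw [CF_eq_sInf_cfSet (prodC C₁ C₂), hE, Real.sInf_empty]
    nlinarith
  -- A global distribution for the product has total mass one, so `O^(M₁ ⊕ M₂)` is inhabited.
  obtain ⟨d, -, hd, -⟩ := hnc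
  obtain ⟨f₀, -, -⟩ := Finset.exists_ne_zero_of_sum_ne_zero (hd.trans_ne one_ne_zero)
  have hp12 : IsBehavior (prodC C₁ C₂) p12 := by
    intro γ hγ
    obtain ⟨⟨γ₁, γ₂⟩, hmem, rfl⟩ := Finset.mem_image.1 hγ
    obtain ⟨hγ₁, hγ₂⟩ := Finset.mem_product.1 hmem
    refine ⟨fun s => ?_, ?_⟩
    · rw [h12 γ₁ hγ₁ γ₂ hγ₂]
      exact mul_nonneg ((h₁ γ₁ hγ₁).1 _) ((h₂ γ₂ hγ₂).1 _)
    · simp only [h12 γ₁ hγ₁ γ₂ hγ₂]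
      rw [sum_restr_mul, (h₁ γ₁ hγ₁).2, (h₂ γ₂ hγ₂).2, one_mul]
  have key : ∀ x ∈ cfSet C₁ p₁, ∀ y ∈ cfSet C₂ p₂,
      x + y - x * y ∈ cfSet (prodC C₁ C₂) p12 := by
    intro x hx y hy
    obtain ⟨hx0, hx1, d₁, hd₁, hs₁, hle₁⟩ := (mem_cfSet_iff h₁ x).1 hx
    obtain ⟨hy0, hy1, d₂, hd₂, hs₂, hle₂⟩ := (mem_cfSet_iff h₂ y).1 hy
    refine (mem_cfSet_iff hp12 _).2 ⟨by nlinarith, by nlinarith, prodDist d₁ d₂,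
      fun f => mul_nonneg (hd₁ _) (hd₂ _), ?_, fun γ hγ s => ?_⟩
    · exact (sum_comp_inl_mul_comp_inr d₁ d₂).trans (by rw [hs₁, hs₂, one_mul])
    · obtain ⟨⟨γ₁, γ₂⟩, hmem, rfl⟩ := Finset.mem_image.1 hγ
      obtain ⟨hγ₁, hγ₂⟩ := Finset.mem_product.1 hmem
      rw [h12 γ₁ hγ₁ γ₂ hγ₂, marg_joinCtx]
      calc (1 - (x + y - x * y)) *
            (marg γ₁ d₁ (restr1 γ₁ γ₂ s) * marg γ₂ d₂ (restr2 γ₁ γ₂ s))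
          = ((1 - x) * marg γ₁ d₁ (restr1 γ₁ γ₂ s)) *
            ((1 - y) * marg γ₂ d₂ (restr2 γ₁ γ₂ s)) := by ring
        _ ≤ p₁ γ₁ (restr1 γ₁ γ₂ s) * p₂ γ₂ (restr2 γ₁ γ₂ s) :=
          mul_le_mul (hle₁ γ₁ hγ₁ _) (hle₂ γ₂ hγ₂ _)
            (mul_nonneg (sub_nonneg.2 hy1) (marg_nonneg γ₂ hd₂ _)) ((h₁ γ₁ hγ₁).1 _)
  refine le_of_forall_cfSet (cfSet_nonempty h₁ (f₀ ∘ Sum.inl)) fun x hx => ?_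
  have hy := le_of_forall_cfSet (l := x) (c := CF (prodC C₁ C₂) p12)
    (cfSet_nonempty h₂ (f₀ ∘ Sum.inr)) fun y hy => ?_
  · linarith
  · have := csInf_le (bddBelow_cfSet (prodC C₁ C₂) p12) (key x hx y hy)
    rw [← CF_eq_sInf_cfSet] at this
    linarith
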